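/- arXiv:1602.02882 — 2 statements merged into one kernel-verified Lean document; each statement's English description precedes it below -/
import Mathlib

section
/- Let d ≥ 1, p ≥ 1 and let c_{kℓ} : ℝ^d → ℝ (1 ≤ k,ℓ ≤ p) be the entries of a matrix covariance function C. Assume: (i) there exist constants A < ∞ and τ > 0 such that |c_{kℓ}(x)| ≤ A/(1 + |x|^{d+τ}) for all x ∈ ℝ^d and all k,ℓ; (ii) the Fourier inversion c_{kℓ}(x) = ∫_{ℝ^d} ĉ_{kℓ}(f) e^{i f·x} df holds for all x and all k,ℓ, where ĉ_{kℓ}(f) = (2π)^{-d} ∫_{ℝ^d} c_{kℓ}(x) e^{-i f·x} dx; (iii) for every f ∈ ℝ^d the Hermitian p×p matrix Ĉ(f) = {ĉ_{kℓ}(f)} has smallest eigenvalue λ₁(Ĉ(f)) > 0; (iv) there exists Δ > 0 such that for each k = 1,…,p the points (x^{(k)}_i)_{i ∈ ℕ⁺} in ℝ^d satisfy |x^{(k)}_i − x^{(k)}_j| ≥ Δ whenever i ≠ j. Then the covariance matrices Σ (of size N × N with N = n₁+⋯+n_p, with entry at row N_{k−1}+i and column N_{ℓ−1}+j equal to c_{kℓ}(x^{(k)}_i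 − x^{(ℓ)}_j), where N_k = n₁+⋯+n_k and N₀ = 0) satisfy inf over all n₁,…,n_p ∈ ℕ⁺ of λ₁(Σ) > 0, i.e. the smallest eigenvalue of Σ is bounded away from zero uniformly in n₁,…,n_p. -/
open MeasureTheory Matrix Complex Filter
open scoped BigOperators Real

/-!
Let `E = ℝ^d` and let `r > 0` be the minimal separation. Take a Schwartz function `φ = η ⋆ η`
supported in the ball of radius `r`, with `η` real and even, so that `𝓕 φ = (𝓕 η)² ≥ 0` and
`φ 0 > 0`. For small `s > 0` the function `χ = φ + s Δφ` has the same support and `χ 0 > 0`, while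
its Fourier transform `ψ w = (1 - s (2π‖w‖)²) 𝓕 φ w` is nonpositive outside a ball. The spectral
density matrix is uniformly positive definite on that ball, hence it dominates `ε ψ w • 1` at every
frequency `w`, for some `ε > 0`. By the easy direction of Cramér's theorem, every covariance matrix
dominates the matrix with entries `ε δ_{k(a) k(b)} χ (x a - x b)`, which is `ε χ(0) • 1` because `χ`
vanishes at all vectors of norm at least `r`.
-/

open scoped FourierTransform SchwartzMap ComplexOrder ComplexConjugate
open scoped RealInnerProductSpace

section PosSemidef

theorem posSemidef_integral {Ω α : Type*} [MeasurableSpace Ω] {μ : Measure Ω} [Finite α]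
    {M : Ω → Matrix α α ℂ} (hM_int : ∀ a b, Integrable (fun ω => M ω a b) μ)
    (hM : ∀ ω, (M ω).PosSemidef) :
    (Matrix.of fun a b => ∫ ω, M ω a b ∂μ).PosSemidef := by
  have := Fintype.ofFinite α
  refine .of_dotProduct_mulVec_nonneg (Matrix.ext fun a b => ?_) fun v => ?_
  · simp only [conjTranspose_apply, of_apply, Complex.star_def, ← integral_conj]
    exact integral_congr_ae (ae_of_all _ fun ω => (hM ω).isHermitian.apply a b)
  · have hterm a b : Integrable (fun ω => M ω a b * v b) μ := (hM_int a b).mul_const _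
    calc 0 ≤ ∫ ω, star v ⬝ᵥ (M ω *ᵥ v) ∂μ :=
          integral_nonneg fun ω => (hM ω).dotProduct_mulVec_nonneg v
      _ = star v ⬝ᵥ ((Matrix.of fun a b => ∫ ω, M ω a b ∂μ) *ᵥ v) := by
          simp only [dotProduct, mulVec, of_apply]
          rw [integral_finsetSum _ fun a _ =>
            (integrable_finsetSum _ fun b _ => hterm a b).const_mul _]
          simp_rw [integral_const_mul]
          congr! with a
          rw [integral_finsetSum _ fun b _ => hterm a b]
          simp_rw [integral_mul_const]

theorem exists_pos_posSemidef_sub_smul_one_of_isCompact {T α : Type*} [TopologicalSpace T]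
    [Finite α] [DecidableEq α] {K : Set T} (hK : IsCompact K) {M : T → Matrix α α ℂ}
    (hM : ContinuousOn M K) (hpos : ∀ t ∈ K, (M t).PosDef) :
    ∃ δ : ℝ, 0 < δ ∧ ∀ t ∈ K, (M t - δ • (1 : Matrix α α ℂ)).PosSemidef := by
  have := Fintype.ofFinite α
  let q : Matrix α α ℂ × EuclideanSpace ℂ α → ℝ := fun y => (star y.2.ofLp ⬝ᵥ (y.1 *ᵥ y.2.ofLp)).re
  have hq : Continuous q := by
    have hofLp : Continuous fun y : Matrix α α ℂ × EuclideanSpace ℂ α => y.2.ofLp :=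
      (PiLp.continuous_ofLp 2 _).comp continuous_snd
    exact continuous_re.comp (hofLp.star.dotProduct (continuous_fst.matrix_mulVec hofLp))
  have hprod : ContinuousOn (fun y : T × EuclideanSpace ℂ α => (M y.1, y.2))
      (K ×ˢ Metric.sphere 0 1) :=
    (hM.comp continuousOn_fst fun y hy => hy.1).prodMk continuousOn_snd
  obtain ⟨δ, hδ, hqδ⟩ := (hK.prod (isCompact_sphere _ _)).exists_forall_le'
    (hq.comp_continuousOn hprod) (a := 0) fun y hy =>
      (hpos y.1 hy.1).re_dotProduct_pos fun h0 => by
        have hy0 : y.2 = 0 := WithLp.ofLp_injective 2 h0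
        simpa [hy0] using hy.2
  refine ⟨δ, hδ, fun t ht => ?_⟩
  have hH : (M t - δ • (1 : Matrix α α ℂ)).IsHermitian :=
    (hpos t ht).isHermitian.sub (isHermitian_one.smul (.all δ))
  rw [hH.posSemidef_iff_eigenvalues_nonneg]
  intro i
  have hunit : ‖hH.eigenvectorBasis i‖ = 1 := hH.eigenvectorBasis.norm_eq_one i
  have hself : (star (hH.eigenvectorBasis i).ofLp ⬝ᵥ (hH.eigenvectorBasis i).ofLp).re = 1 := by
    rw [dotProduct_comm, ← EuclideanSpace.inner_eq_star_dotProduct]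
    simp [hunit]
  have hle : δ ≤ q (M t, hH.eigenvectorBasis i) :=
    hqδ (t, hH.eigenvectorBasis i) ⟨ht, by simp [hunit]⟩
  simpa [hH.eigenvalues_eq, sub_mulVec, smul_mulVec, hself, q] using hle

theorem exists_pos_posSemidef_sub_smul_one_of_nonpos_off_compact {T α : Type*}
    [TopologicalSpace T] [Finite α] [DecidableEq α] {M : T → Matrix α α ℂ} (hM : Continuous M)
    (hpos : ∀ t, (M t).PosDef) {ψ : T → ℝ} (hψ : Continuous ψ) {K : Set T} (hK : IsCompact K)
    (hψK : ∀ t ∉ K, ψ t ≤ 0) :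
    ∃ ε : ℝ, 0 < ε ∧ ∀ t, (M t - (ε * ψ t) • (1 : Matrix α α ℂ)).PosSemidef := by
  obtain ⟨δ, hδ, hMδ⟩ := exists_pos_posSemidef_sub_smul_one_of_isCompact hK hM.continuousOn
    fun t _ => hpos t
  obtain ⟨B, hB⟩ := hK.bddAbove_image hψ.continuousOn
  have hψB t (ht : t ∈ K) : ψ t ≤ |B| + 1 := by
    linarith [hB (Set.mem_image_of_mem ψ ht), le_abs_self B]
  have hB_pos : 0 < |B| + 1 := by positivity
  refine ⟨δ / (|B| + 1), by positivity, fun t => ?_⟩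
  by_cases ht : t ∈ K
  · have hle : 0 ≤ δ - δ / (|B| + 1) * ψ t := by
      rw [sub_nonneg, div_mul_eq_mul_div, div_le_iff₀ hB_pos]
      exact mul_le_mul_of_nonneg_left (hψB t ht) hδ.le
    simpa [sub_smul] using (hMδ t ht).add (PosSemidef.one.smul hle)
  · have hle : 0 ≤ -(δ / (|B| + 1) * ψ t) :=
      neg_nonneg.2 (mul_nonpos_of_nonneg_of_nonpos (by positivity) (hψK t ht))
    simpa [sub_eq_add_neg] using (hpos t).posSemidef.add (PosSemidef.one.smul hle)

theorem posSemidef_of_map_ofReal {α : Type*} [Finite α] {A : Matrix α α ℝ}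
    (hA : (A.map ofReal).PosSemidef) : A.PosSemidef := by
  have := Fintype.ofFinite α
  refine .of_dotProduct_mulVec_nonneg (Matrix.ext fun a b => ?_) fun v => ?_
  · simpa using hA.isHermitian.apply a b
  · have hstar : star (ofReal ∘ v) = ofReal ∘ v := funext fun a => conj_ofReal (v a)
    have hmap : A.map ofReal *ᵥ (ofReal ∘ v) = ofReal ∘ (A *ᵥ v) :=
      funext fun a => (RingHom.map_mulVec ofRealHom A v a).symm
    have hquad := hA.dotProduct_mulVec_nonneg (ofReal ∘ v)
    rw [hstar, hmap] at hquad
    exact zero_le_real.1 (hquad.trans_eq (RingHom.map_dotProduct ofRealHom v (A *ᵥ v)).symm)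

theorem mul_sum_sq_le_of_posSemidef_sub_smul_one {α : Type*} [Fintype α] [DecidableEq α]
    {A : Matrix α α ℝ} {ε : ℝ} (hA : (A - ε • (1 : Matrix α α ℝ)).PosSemidef) (v : α → ℝ) :
    ε * ∑ a, v a ^ 2 ≤ ∑ a, ∑ b, v a * A a b * v b := by
  have hquad := hA.dotProduct_mulVec_nonneg v
  rw [sub_mulVec, dotProduct_sub, sub_nonneg, smul_mulVec, one_mulVec, dotProduct_smul] at hquad
  simpa [dotProduct, mulVec, Finset.mul_sum, sq, mul_assoc] using hquad

end PosSemidef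

section CrossCovarianceMatrix

variable {κ α E R : Type*}

/-- The covariance matrix of observations of a multivariate stationary process with cross-covariance
functions `c`: observation `a` is that of the component `k a` at the point `x a`. -/
def crossCovarianceMatrix [Sub E] (c : κ → κ → E → R) (k : α → κ) (x : α → E) : Matrix α α R :=
  .of fun a b => c (k a) (k b) (x a - x b)

theorem crossCovarianceMatrix_mul_one_of_separated [NormedAddCommGroup E] [Semiring R]
    [DecidableEq κ] [DecidableEq α] {g : E → R} {r : ℝ} (hg : ∀ y, r ≤ ‖y‖ → g y = 0)
    {k : α → κ} {x : α → E} (hx : ∀ a b, k a = k b → a ≠ b → r ≤ ‖x a - x b‖) :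
    crossCovarianceMatrix (fun i j y => g y * (1 : Matrix κ κ R) i j) k x =
      g 0 • (1 : Matrix α α R) := by
  ext a b
  obtain rfl | hab := eq_or_ne a b
  · simp [crossCovarianceMatrix]
  obtain hk | hk := eq_or_ne (k a) (k b)
  · simp [crossCovarianceMatrix, hab, hg _ (hx a b hk hab)]
  · simp [crossCovarianceMatrix, hab, hk]

end CrossCovarianceMatrix

open scoped Laplacian in
theorem laplacian_eq_zero_of_notMem_tsupport {F G : Type*} [NormedAddCommGroup F]
    [InnerProductSpace ℝ F] [FiniteDimensional ℝ F] [NormedAddCommGroup G] [NormedSpace ℝ G]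
    {f : F → G} {x : F} (hx : x ∉ tsupport f) : Δ f x = 0 := by
  have hcongr := InnerProductSpace.laplacian_congr_nhds (notMem_tsupport_iff_eventuallyEq.1 hx)
  rw [hcongr.eq_of_nhds]
  exact congrFun (InnerProductSpace.laplacian_const (c := (0 : G))) x

section Fourier

variable {E : Type*} [NormedAddCommGroup E] [InnerProductSpace ℝ E] [MeasurableSpace E]
  [BorelSpace E] [FiniteDimensional ℝ E]

theorem fourierInv_ofReal_zero (f : E → ℝ) :
    𝓕⁻ (fun w => (f w : ℂ)) 0 = ((∫ w, f w : ℝ) : ℂ) := by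
  rw [Real.fourierInv_eq, ← integral_complex_ofReal]
  simp

theorem conj_fourier_ofReal_of_even {f : E → ℝ} (hf : Function.Even f) (w : E) :
    conj (𝓕 (fun x => (f x : ℂ)) w) = 𝓕 (fun x => (f x : ℂ)) w := by
  rw [Real.fourier_eq, ← integral_conj, ← integral_neg_eq_self]
  simp [hf _, Circle.smul_def, AddChar.map_neg_eq_inv, ← Circle.coe_inv_eq_conj]

open scoped ContDiff in
theorem exists_schwartzMap_pos_at_zero_fourier_nonneg {r : ℝ} (hr : 0 < r) :
    ∃ φ : 𝓢(E, ℂ), tsupport φ ⊆ Metric.ball 0 r ∧ 0 < (φ 0).re ∧ ∀ w, 0 ≤ 𝓕 φ w := by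
  let b : ContDiffBump (0 : E) := ⟨r / 8, r / 4, by positivity, by linarith⟩
  have hb_compact : HasCompactSupport (fun y => (b y : ℂ)) :=
    b.hasCompactSupport.comp_left Complex.ofReal_zero
  let η : 𝓢(E, ℂ) := hb_compact.toSchwartzMap (ofRealCLM.contDiff.comp b.contDiff)
  let φ : 𝓢(E, ℂ) := SchwartzMap.convolution (.mul ℂ ℂ) η η
  have hφ x : φ x = ((∫ t, b t * b (x - t) : ℝ) : ℂ) := by
    rw [SchwartzMap.convolution_apply, ← integral_complex_ofReal]
    simp only [convolution, ofReal_mul]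
    rfl
  have hφ_supp : Function.support φ ⊆ Metric.closedBall 0 (r / 2) := fun x hx => by
    obtain ⟨t, ht⟩ : ∃ t, b t * b (x - t) ≠ 0 := by
      contrapose! hx
      simp [hφ, hx]
    have hb_supp {y : E} (hy : b y ≠ 0) : ‖y‖ < r / 4 := by
      simpa [b.support_eq] using Function.mem_support.2 hy
    rw [mem_closedBall_zero_iff]
    linarith [norm_le_norm_add_norm_sub' x t, hb_supp (left_ne_zero_of_mul ht),
      hb_supp (right_ne_zero_of_mul ht)]
  refine ⟨φ, ?_, ?_, fun w => ?_⟩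
  · exact (closure_minimal hφ_supp Metric.isClosed_closedBall).trans
      (Metric.closedBall_subset_ball (by linarith))
  · have hb0 : b 0 = 1 := b.one_of_mem_closedBall (by simp [b.rIn_pos.le])
    simp only [hφ, zero_sub, b.neg, ofReal_re]
    exact (b.continuous.mul b.continuous).integral_pos_of_hasCompactSupport_nonneg_nonzero
      b.hasCompactSupport.mul_right (fun t => mul_self_nonneg (b t)) (x := 0) (by simp [hb0])
  · have hη_real : conj (𝓕 η w) = 𝓕 η w := conj_fourier_ofReal_of_even b.neg w
    calc 0 ≤ conj (𝓕 η w) * 𝓕 η w := star_mul_self_nonneg _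
      _ = 𝓕 φ w := by simp [hη_real, φ, SchwartzMap.fourier_convolution]

open scoped Laplacian in
theorem fourier_laplacian_apply (φ : 𝓢(E, ℂ)) (w : E) :
    𝓕 (Δ φ) w = ((-(2 * π * ‖w‖) ^ 2 : ℝ) : ℂ) * 𝓕 φ w := by
  have hgrowth : (fun w : E => ‖w‖ ^ 2).HasTemperateGrowth := by fun_prop
  rw [SchwartzMap.laplacian_eq_fourierMultiplierCLM, SchwartzMap.fourierMultiplierCLM_apply]
  simp [FourierTransform.fourier_smul, SchwartzMap.smulLeftCLM_apply_apply hgrowth]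
  ring

open scoped Laplacian in
theorem exists_nonpos_off_compact_fourierInv_eq_zero {r : ℝ} (hr : 0 < r) :
    ∃ (ψ : E → ℝ) (K : Set E), Continuous ψ ∧ Integrable ψ ∧ IsCompact K ∧
      (∀ w ∉ K, ψ w ≤ 0) ∧ 0 < ∫ w, ψ w ∧
      ∀ x, r ≤ ‖x‖ → 𝓕⁻ (fun w => (ψ w : ℂ)) x = 0 := by
  obtain ⟨φ, hφ_supp, hφ0, hφ_fourier⟩ := exists_schwartzMap_pos_at_zero_fourier_nonneg (E := E) hr
  obtain ⟨s, hs, hs0⟩ := exists_pos_mul_lt hφ0 (-(Δ φ 0).re)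
  let χ : 𝓢(E, ℂ) := φ + s • Δ φ
  let ψ : E → ℝ := fun w => (1 - s * (2 * π * ‖w‖) ^ 2) * (𝓕 φ w).re
  have hψ : (fun w => (ψ w : ℂ)) = 𝓕 χ := funext fun w => by
    have hreal : ((𝓕 φ w).re : ℂ) = 𝓕 φ w := (eq_re_of_ofReal_le (hφ_fourier w)).symm
    simp only [ψ, χ, FourierTransform.fourier_add, FourierTransform.fourier_smul,
      _root_.add_apply, _root_.smul_apply, fourier_laplacian_apply, ofReal_mul, hreal, real_smul]
    push_cast
    ring
  have hψ_inv x : 𝓕⁻ (fun w => (ψ w : ℂ)) x = χ x := by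
    rw [hψ, ← SchwartzMap.fourierInv_coe, FourierTransform.fourierInv_fourier_eq]
  have hψ_int : Integrable fun w => (ψ w : ℂ) := hψ ▸ (𝓕 χ).integrable
  refine ⟨ψ, Metric.closedBall 0 (2 * π * √s)⁻¹, by fun_prop, hψ_int.re,
    isCompact_closedBall _ _, fun w hw => ?_, ?_, fun x hx => ?_⟩
  · have hw_norm : 1 ≤ 2 * π * √s * ‖w‖ := by
      have : (2 * π * √s)⁻¹ < ‖w‖ := by simpa using hw
      exact ((inv_lt_iff_one_lt_mul₀' (by positivity)).1 this).le
    have hfactor : 1 ≤ s * (2 * π * ‖w‖) ^ 2 := by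
      calc 1 ≤ (2 * π * √s * ‖w‖) ^ 2 := one_le_pow₀ hw_norm
        _ = s * (2 * π * ‖w‖) ^ 2 := by simp only [mul_pow, Real.sq_sqrt hs.le]; ring
    exact mul_nonpos_of_nonpos_of_nonneg (sub_nonpos.2 hfactor)
      (Complex.nonneg_iff.1 (hφ_fourier w)).1
  · have hχ0 : ((∫ w, ψ w : ℝ) : ℂ) = χ 0 := by
      rw [← hψ_inv, fourierInv_ofReal_zero]
    rw [← ofReal_re (∫ w, ψ w), hχ0]
    simp only [χ, _root_.add_apply, _root_.smul_apply, add_re, smul_re, smul_eq_mul]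
    linarith
  · have hxφ : x ∉ tsupport φ := fun h => hx.not_gt (by simpa using hφ_supp h)
    simp [hψ_inv, χ, SchwartzMap.laplacian_apply, image_eq_zero_of_notMem_tsupport hxφ,
      laplacian_eq_zero_of_notMem_tsupport hxφ]

theorem integrable_fourierChar_smul {f : E → ℂ} (hf : Integrable f) (x : E) :
    Integrable fun w => 𝐞 ⟪w, x⟫ • f w := by
  simpa using (Real.fourierIntegral_convergent_iff (-x)).2 hf

variable {κ α : Type*}

theorem posSemidef_crossCovarianceMatrix_fourierInv [Finite α] {G : E → Matrix κ κ ℂ}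
    (hG_int : ∀ i j, Integrable fun w => G w i j) (hG : ∀ w, (G w).PosSemidef)
    (k : α → κ) (x : α → E) :
    (crossCovarianceMatrix (fun i j => 𝓕⁻ fun w => G w i j) k x).PosSemidef := by
  classical
  have := Fintype.ofFinite α
  let D : E → Matrix α α ℂ := fun w => diagonal fun a => (𝐞 ⟪w, x a⟫ : ℂ)
  have hentry w a b : (D w * (G w).submatrix k k * (D w)ᴴ) a b =
      𝐞 ⟪w, x a - x b⟫ • G w (k a) (k b) := by
    simp only [D, diagonal_conjTranspose, mul_diagonal, diagonal_mul, submatrix_apply,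
      Pi.star_apply, Complex.star_def, ← Circle.coe_inv_eq_conj, inner_sub_right,
      AddChar.map_sub_eq_div, Circle.smul_def, Circle.coe_div, Circle.coe_inv, smul_eq_mul]
    ring
  have hint a b : Integrable fun w => (D w * (G w).submatrix k k * (D w)ᴴ) a b := by
    simpa only [hentry] using integrable_fourierChar_smul (hG_int (k a) (k b)) (x a - x b)
  convert posSemidef_integral hint fun w =>
    ((hG w).submatrix k).mul_mul_conjTranspose_same (D w) using 1
  ext a b
  simp [crossCovarianceMatrix, hentry, Real.fourierInv_eq]

theorem crossCovarianceMatrix_fourierInv_sub {G H : E → Matrix κ κ ℂ}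
    (hG : ∀ i j, Integrable fun w => G w i j) (hH : ∀ i j, Integrable fun w => H w i j)
    (k : α → κ) (x : α → E) :
    crossCovarianceMatrix (fun i j => 𝓕⁻ fun w => (G w - H w) i j) k x =
      crossCovarianceMatrix (fun i j => 𝓕⁻ fun w => G w i j) k x -
        crossCovarianceMatrix (fun i j => 𝓕⁻ fun w => H w i j) k x := by
  ext a b
  simp only [crossCovarianceMatrix, Real.fourierInv_eq, Matrix.sub_apply, of_apply, smul_sub]
  exact integral_sub (integrable_fourierChar_smul (hG _ _) _)
    (integrable_fourierChar_smul (hH _ _) _)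

theorem crossCovarianceMatrix_fourierInv_smul_one [DecidableEq κ] [DecidableEq α] {ψ : E → ℝ}
    {r : ℝ} (hψ : ∀ y, r ≤ ‖y‖ → 𝓕⁻ (fun w => (ψ w : ℂ)) y = 0) {k : α → κ} {x : α → E}
    (hx : ∀ a b, k a = k b → a ≠ b → r ≤ ‖x a - x b‖) (ε : ℝ) :
    crossCovarianceMatrix (fun i j => 𝓕⁻ fun w => ((ε * ψ w) • (1 : Matrix κ κ ℂ)) i j) k x =
      (ε * ∫ w, ψ w) • (1 : Matrix α α ℂ) := by
  have hfactor i j y : 𝓕⁻ (fun w => ((ε * ψ w) • (1 : Matrix κ κ ℂ)) i j) y =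
      ε * 𝓕⁻ (fun w => (ψ w : ℂ)) y * (1 : Matrix κ κ ℂ) i j := by
    simp_rw [Real.fourierInv_eq, ← integral_const_mul, ← integral_mul_const]
    congr! 2
    simp only [Matrix.smul_apply, Circle.smul_def, smul_eq_mul, real_smul, ofReal_mul]
    ring
  simp_rw [funext (hfactor _ _)]
  rw [crossCovarianceMatrix_mul_one_of_separated (fun y hy => by rw [hψ y hy, mul_zero]) hx,
    fourierInv_ofReal_zero]
  norm_cast

universe u in
theorem exists_pos_posSemidef_crossCovarianceMatrix_sub_smul_one [Finite κ]
    {G : E → Matrix κ κ ℂ} (hG_cont : Continuous G) (hG_int : ∀ i j, Integrable fun w => G w i j)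
    (hG : ∀ w, (G w).PosDef) {r : ℝ} (hr : 0 < r) :
    ∃ ε : ℝ, 0 < ε ∧ ∀ (α : Type u) [Finite α] [DecidableEq α] (k : α → κ) (x : α → E),
      (∀ a b, k a = k b → a ≠ b → r ≤ ‖x a - x b‖) →
      (crossCovarianceMatrix (fun i j => 𝓕⁻ fun w => G w i j) k x
        - ε • (1 : Matrix α α ℂ)).PosSemidef := by
  classical
  obtain ⟨ψ, K, hψ_cont, hψ_int, hK, hψK, hψ_pos, hψ_inv⟩ :=
    exists_nonpos_off_compact_fourierInv_eq_zero (E := E) hr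
  obtain ⟨ε, hε, hGψ⟩ :=
    exists_pos_posSemidef_sub_smul_one_of_nonpos_off_compact hG_cont hG hψ_cont hK hψK
  have hψ_one_int i j : Integrable fun w => ((ε * ψ w) • (1 : Matrix κ κ ℂ)) i j :=
    (hψ_int.const_mul ε).smul_const _
  refine ⟨ε * ∫ w, ψ w, by positivity, fun α _ _ k x hx => ?_⟩
  rw [← crossCovarianceMatrix_fourierInv_smul_one hψ_inv hx,
    ← crossCovarianceMatrix_fourierInv_sub hG_int hψ_one_int]
  exact posSemidef_crossCovarianceMatrix_fourierInv
    (fun i j => (hG_int i j).sub (hψ_one_int i j)) hGψ k x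

end Fourier

section Coordinates

theorem integrable_mul_cexp_I_mul_iff {Ω : Type*} [MeasurableSpace Ω] {μ : Measure Ω} {g : Ω → ℂ}
    {θ : Ω → ℝ} (hθ : Measurable θ) :
    Integrable (fun ω => g ω * cexp (I * θ ω)) μ ↔ Integrable g μ := by
  refine ⟨fun h => ?_, fun h => ?_⟩
  · refine (h.mul_bdd (g := fun ω => cexp (I * (-θ ω : ℝ))) (c := 1) ?_ ?_).congr ?_
    · fun_prop
    · exact ae_of_all _ fun ω => by rw [norm_exp_I_mul_ofReal]
    · exact ae_of_all _ fun ω => by simp [mul_assoc, ← Complex.exp_add]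
  · refine h.mul_bdd (c := 1) ?_ (ae_of_all _ fun ω => by rw [norm_exp_I_mul_ofReal])
    fun_prop

variable {ι : Type*} [Fintype ι]

theorem continuous_integral_mul_cexp_neg_I_mul (g : (ι → ℝ) → ℂ) :
    Continuous fun f : ι → ℝ =>
      ∫ x : ι → ℝ, g x * cexp (-(I * ((∑ t, f t * x t : ℝ) : ℂ))) := by
  have hphase (f x : ι → ℝ) :
      cexp (-(I * ((∑ t, f t * x t : ℝ) : ℂ))) = cexp (I * (-∑ t, f t * x t : ℝ)) := by
    simp
  simp_rw [hphase]
  have hint (f : ι → ℝ) : Integrable (fun x => g x * cexp (I * (-∑ t, f t * x t : ℝ))) ↔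
      Integrable g := integrable_mul_cexp_I_mul_iff (by fun_prop)
  by_cases hg : Integrable g
  · refine continuous_of_dominated (fun f => ((hint f).2 hg).aestronglyMeasurable)
      (fun f => ae_of_all _ fun x => ?_) hg.norm (ae_of_all _ fun x => by fun_prop)
    rw [norm_mul, norm_exp_I_mul_ofReal, mul_one]
  · simp_rw [integral_undef ((hint _).not.2 hg)]
    exact continuous_const

theorem integrable_of_fourier_inversion {g ghat : (ι → ℝ) → ℂ} {r : ℝ}
    (hghat : ∀ f, ghat f = r • ∫ x, g x * cexp (-(I * ((∑ t, f t * x t : ℝ) : ℂ))))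
    (hg : ∀ x, g x = ∫ f, ghat f * cexp (I * ((∑ t, f t * x t : ℝ) : ℂ))) :
    Integrable ghat := by
  -- If `ghat` is not integrable, its inversion integrals are `0` by convention, so `g = 0`.
  by_contra hni
  have hg0 x : g x = 0 := by
    rw [hg, integral_undef]
    rwa [integrable_mul_cexp_I_mul_iff (by fun_prop)]
  have hghat0 : ghat = 0 := funext fun f => by simp [hghat, hg0]
  exact hni (hghat0 ▸ integrable_zero _ _ _)

theorem fourierInv_comp_ofLp (ghat : (ι → ℝ) → ℂ) (x : ι → ℝ) :
    𝓕⁻ (fun w : EuclideanSpace ℝ ι => ghat w.ofLp) (WithLp.toLp 2 ((2 * π)⁻¹ • x)) =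
      ∫ f, ghat f * cexp (I * ((∑ t, f t * x t : ℝ) : ℂ)) := by
  rw [Real.fourierInv_eq', ← (PiLp.volume_preserving_toLp ι).integral_comp
    (MeasurableEquiv.toLp 2 (ι → ℝ)).measurableEmbedding]
  refine integral_congr_ae (ae_of_all _ fun f => ?_)
  have hphase : 2 * π * ⟪WithLp.toLp 2 f, WithLp.toLp 2 ((2 * π)⁻¹ • x)⟫ = ∑ t, f t * x t := by
    rw [WithLp.toLp_smul, inner_smul_right, mul_inv_cancel_left₀ Real.two_pi_pos.ne']
    simp [PiLp.inner_apply, mul_comm]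
  simp only [hphase, smul_eq_mul, mul_comm I, mul_comm (ghat f)]

theorem norm_le_norm_toLp (x : ι → ℝ) : ‖x‖ ≤ ‖WithLp.toLp 2 x‖ :=
  (pi_norm_le_iff_of_nonneg (norm_nonneg _)).2 fun t => PiLp.norm_apply_le (WithLp.toLp 2 x) t

universe u in
theorem smallest_eigenvalue_covariance_matrix_bounded_away_from_zero_general
    {ι κ : Type*} [Fintype ι] [Finite κ]
    (c : κ → κ → (ι → ℝ) → ℝ) (chat : κ → κ → (ι → ℝ) → ℂ)
    (hchat_cont : ∀ k l, Continuous (chat k l)) (hchat_int : ∀ k l, Integrable (chat k l))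
    (hinv : ∀ k l x, (c k l x : ℂ) =
      ∫ f, chat k l f * cexp (I * ((∑ t, f t * x t : ℝ) : ℂ)))
    (hpos : ∀ f, (Matrix.of fun k l => chat k l f).PosDef) {r : ℝ} (hr : 0 < r) :
    ∃ ε : ℝ, 0 < ε ∧ ∀ (α : Type u) [Finite α] [DecidableEq α] (k : α → κ) (x : α → ι → ℝ),
      (∀ a b, k a = k b → a ≠ b → r ≤ ‖x a - x b‖) →
      (crossCovarianceMatrix c k x - ε • (1 : Matrix α α ℝ)).PosSemidef := by
  let G : EuclideanSpace ℝ ι → Matrix κ κ ℂ := fun w => .of fun i j => chat i j w.ofLp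
  have hG_cont : Continuous G :=
    continuous_matrix fun i j => (hchat_cont i j).comp (PiLp.continuous_ofLp 2 _)
  have hG_int i j : Integrable fun w => G w i j :=
    (PiLp.volume_preserving_ofLp ι).integrable_comp_of_integrable (hchat_int i j)
  obtain ⟨ε, hε, hG⟩ := exists_pos_posSemidef_crossCovarianceMatrix_sub_smul_one hG_cont hG_int
    (fun w => hpos w.ofLp) (r := (2 * π)⁻¹ * r) (by positivity)
  refine ⟨ε, hε, fun α _ _ k x hx => posSemidef_of_map_ofReal ?_⟩
  let y : α → EuclideanSpace ℝ ι := fun a => WithLp.toLp 2 ((2 * π)⁻¹ • x a)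
  have hy a b : y a - y b = WithLp.toLp 2 ((2 * π)⁻¹ • (x a - x b)) := by
    rw [← WithLp.toLp_sub, smul_sub]
  have hcov : (crossCovarianceMatrix c k x).map ofReal =
      crossCovarianceMatrix (fun i j => 𝓕⁻ fun w => G w i j) k y := by
    ext a b
    simp only [crossCovarianceMatrix, map_apply, of_apply, hy, hinv, G, fourierInv_comp_ofLp]
  have hmap_one : (ε • (1 : Matrix α α ℝ)).map ofReal = ε • (1 : Matrix α α ℂ) := by
    ext a b
    obtain rfl | hab := eq_or_ne a b <;> simp [*]
  rw [Matrix.map_sub _ ofReal_sub, hcov, hmap_one]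
  refine hG α k y fun a b hk hab => ?_
  rw [hy, WithLp.toLp_smul, norm_smul, norm_inv, Real.norm_of_nonneg Real.two_pi_pos.le]
  gcongr
  exact (hx a b hk hab).trans (norm_le_norm_toLp _)

end Coordinates

/-- **Theorem 1 (Bachoc & Furrer).** Under a polynomial-decay bound on the covariance and
cross covariance functions, Fourier inversion, strict positive definiteness of the spectral
density matrix at every frequency, and a minimal-distance condition on the observation points
of each component, the smallest eigenvalue of the covariance matrix `Σ` is bounded away from
zero uniformly in the sample sizes `n₁, …, n_p`.  The smallest-eigenvalue bound is expressed
through the Rayleigh quotient: `ε * ‖v‖² ≤ vᵀ Σ v` for every real vector `v`. -/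
theorem smallest_eigenvalue_covariance_matrix_bounded_away_from_zero
    (d p : ℕ) (hd : 1 ≤ d) (hp : 1 ≤ p)
    (c : Fin p → Fin p → (Fin d → ℝ) → ℝ)
    (A τ : ℝ) (hτ : 0 < τ)
    (hdecay : ∀ k l (x : Fin d → ℝ), |c k l x| ≤ A / (1 + ‖x‖ ^ ((d : ℝ) + τ)))
    (chat : Fin p → Fin p → (Fin d → ℝ) → ℂ)
    (hchat : ∀ k l (f : Fin d → ℝ), chat k l f =
      ((2 * π : ℝ) ^ d : ℝ)⁻¹ •
        ∫ x : Fin d → ℝ, (c k l x : ℂ) *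
          Complex.exp (-(Complex.I * ((∑ t, f t * x t : ℝ) : ℂ))))
    (hinv : ∀ k l (x : Fin d → ℝ), (c k l x : ℂ) =
      ∫ f : Fin d → ℝ, chat k l f *
        Complex.exp (Complex.I * ((∑ t, f t * x t : ℝ) : ℂ)))
    (hherm : ∀ f : Fin d → ℝ, (Matrix.of fun k l => chat k l f).IsHermitian)
    (hpos : ∀ (f : Fin d → ℝ) (i : Fin p), 0 < (hherm f).eigenvalues i)
    (X : Fin p → ℕ → (Fin d → ℝ)) (Δ : ℝ) (hΔ : 0 < Δ)
    (hsep : ∀ (k : Fin p) (i j : ℕ), i ≠ j → Δ ≤ ‖X k i - X k j‖) :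
    ∃ ε > 0, ∀ n : Fin p → ℕ, (∀ k, 1 ≤ n k) →
      ∀ v : ((k : Fin p) × Fin (n k)) → ℝ,
        ε * ∑ a, v a ^ 2 ≤
          ∑ a, ∑ b, v a * c a.1 b.1 (X a.1 a.2 - X b.1 b.2) * v b := by
  obtain ⟨ε, hε, hcov⟩ :=
    smallest_eigenvalue_covariance_matrix_bounded_away_from_zero_general c chat
      (fun k l => funext (hchat k l) ▸
        (continuous_integral_mul_cexp_neg_I_mul fun x => (c k l x : ℂ)).fun_const_smul _)
      (fun k l => integrable_of_fourier_inversion (hchat k l) (hinv k l)) hinv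
      (fun f => (hherm f).posDef_iff_eigenvalues_pos.2 (hpos f)) hΔ
  refine ⟨ε, hε, fun n _ v => ?_⟩
  have hX (a b : (k : Fin p) × Fin (n k)) (hk : a.1 = b.1) (hab : a ≠ b) :
      Δ ≤ ‖X a.1 a.2 - X b.1 b.2‖ := by
    obtain ⟨⟨k, i⟩, ⟨_, j⟩⟩ := a, b
    obtain rfl := hk
    exact hsep k i j fun hij => hab (by rw [Fin.ext hij])
  exact mul_sum_sq_le_of_posSemidef_sub_smul_one
    (hcov ((k : Fin p) × Fin (n k)) Sigma.fst (fun a => X a.1 a.2) hX) v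
end

section
/- Let d ≥ 1, p ≥ 1, let Θ be a compact subset of ℝ^q, and let {c_{θ,kℓ}(h)}_{1≤k,ℓ≤p}, θ ∈ Θ, be a parametric family of matrix covariance functions. Assume: (i) there exist constants A < ∞ and τ > 0, independent of θ, such that |c_{θ,kℓ}(x)| ≤ A/(1 + |x|^{d+τ}) for all x ∈ ℝ^d, all k,ℓ and all θ ∈ Θ; (ii) for every θ ∈ Θ the Fourier inversion c_{θ,kℓ}(x) = ∫_{ℝ^d} ĉ_{θ,kℓ}(f) e^{i f·x} df holds for all x and all k,ℓ; (iii) the Hermitian matrix Ĉ_θ(f) = {ĉ_{θ,kℓ}(f)}_{1≤k,ℓ≤p} is jointly continuous in (f, θ) and λ₁(Ĉ_θ(f)) > 0 for all f ∈ ℝ^d and all θ ∈ Θ; (iv) there exists Δ > 0 such that for each k = 1,…,p the points (x^{(k)}_i)_{i ∈ ℕ⁺} in ℝ^d satisfy |x^{(k)}_i − x^{(k)}_j| ≥ Δ whenever i ≠ j. Then, with Σ_θ the N × N covariance matrix whose entry at row N_{k−1}+i and column N_{ℓ−1}+j equals c_{θ,kℓ}(x^{(k)}_i − x^{(ℓ)}_j),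 one has inf over all θ ∈ Θ and all n₁,…,n_p ∈ ℕ⁺ of λ₁(Σ_θ) > 0. -/
open MeasureTheory Matrix Complex Filter
open scoped BigOperators Real

/-!
For a Schwartz function `g` supported in a small ball, the weight `(R² - ‖ξ‖²) |ĝ(ξ)|²` is
positive only inside the ball of radius `R`, has positive integral once `R` is large, and has an
inverse Fourier transform supported in a ball of twice the radius of that of `g`, being the
cross-correlation of `g` with a combination of `g` and its Laplacian. Rescaling gives an integrable
minorant `w` of the indicator of a ball whose Fourier transform vanishes at all `x` with `|x| ≥ Δ`.

By compactness the spectral density satisfies `Ĉ_θ(f) ≥ δ` on that ball, uniformly in `θ`, and it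
is positive elsewhere, so `Ĉ_θ(f) ≥ δ w(f) • 1` in the Loewner order for every `f`. By the Schur
product theorem, integrating this inequality against the plane waves `exp (i f·(x_a - x_b))`
preserves it. The left side becomes `δ (∫ w) • 1`: an off-diagonal entry either pairs two distinct
components, where `1` vanishes, or is a value of the transform of `w` at a difference of two
distinct points of the same component.
-/

section LoewnerOrder

open scoped ComplexOrder MatrixOrder

variable {𝕜 n : Type*} [RCLike 𝕜]

lemma smul_one_le_iff_forall_le_eigenvalues [Fintype n] [DecidableEq n] {M : Matrix n n 𝕜}
    (hM : M.IsHermitian) {δ : ℝ} : δ • (1 : Matrix n n 𝕜) ≤ M ↔ ∀ i, δ ≤ hM.eigenvalues i := by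
  rw [← Algebra.algebraMap_eq_smul_one, algebraMap_le_iff_le_spectrum hM.isSelfAdjoint,
    hM.spectrum_real_eq_range_eigenvalues, Set.forall_mem_range]

lemma exists_smul_one_le_of_isCompact_of_posDef [Finite n] [DecidableEq n] {T : Type*}
    [TopologicalSpace T] {K : Set T} (hK : IsCompact K) {M : T → Matrix n n 𝕜}
    (hM : ContinuousOn M K) (hpos : ∀ t ∈ K, (M t).PosDef) :
    ∃ δ : ℝ, 0 < δ ∧ ∀ t ∈ K, δ • (1 : Matrix n n 𝕜) ≤ M t := by
  cases nonempty_fintype n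
  have hcont : ContinuousOn (fun tz : T × EuclideanSpace 𝕜 n ↦
      RCLike.re (star tz.2.ofLp ⬝ᵥ M tz.1 *ᵥ tz.2.ofLp)) (K ×ˢ Metric.sphere 0 1) := by
    rw [continuousOn_iff_continuous_domRestrict] at hM ⊢
    have hMK : Continuous fun tz : K ×ˢ Metric.sphere (0 : EuclideanSpace 𝕜 n) 1 ↦ M tz.1.1 :=
      hM.comp (Continuous.subtype_mk (by fun_prop) fun tz ↦ tz.2.1)
    exact RCLike.continuous_re.comp
      (Continuous.dotProduct (by fun_prop) (hMK.matrix_mulVec (by fun_prop)))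
  obtain ⟨δ, hδ, hle⟩ := (hK.prod (isCompact_sphere 0 1)).exists_forall_le' hcont (a := 0) (by
    rintro ⟨t, z⟩ ⟨ht, hz⟩
    refine (hpos t ht).re_dotProduct_pos ?_
    simpa using ne_zero_of_mem_unit_sphere (⟨z, hz⟩ : Metric.sphere (0 : EuclideanSpace 𝕜 n) 1))
  refine ⟨δ, hδ, fun t ht ↦ (smul_one_le_iff_forall_le_eigenvalues (hpos t ht).1).2 fun i ↦ ?_⟩
  rw [(hpos t ht).1.eigenvalues_eq]
  exact hle (t, (hpos t ht).1.eigenvectorBasis i) ⟨ht, by simp⟩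

lemma posSemidef_integral_s1 [Finite n] {Ω : Type*} [MeasurableSpace Ω] {μ : Measure Ω}
    {A : Ω → Matrix n n 𝕜} (hA : ∀ i j, Integrable (fun ω ↦ A ω i j) μ)
    (hpos : ∀ᵐ ω ∂μ, (A ω).PosSemidef) :
    (Matrix.of fun i j ↦ ∫ ω, A ω i j ∂μ).PosSemidef := by
  cases nonempty_fintype n
  refine .of_dotProduct_mulVec_nonneg (.ext fun i j ↦ ?_) fun z ↦ ?_
  · rw [of_apply, of_apply, RCLike.star_def, ← integral_conj]
    exact integral_congr_ae (hpos.mono fun ω hω ↦ hω.1.apply i j)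
  · have hinteg : ∀ i j, Integrable (fun ω ↦ star (z i) * (A ω i j * z j)) μ :=
      fun i j ↦ ((hA i j).mul_const _).const_mul _
    have hform : star z ⬝ᵥ (Matrix.of fun i j ↦ ∫ ω, A ω i j ∂μ) *ᵥ z =
        ∫ ω, star z ⬝ᵥ A ω *ᵥ z ∂μ := by
      simp only [dotProduct, mulVec, Pi.star_apply, Finset.mul_sum, of_apply]
      rw [integral_finsetSum _ fun i _ ↦ integrable_finsetSum _ fun j _ ↦ hinteg i j]
      refine Finset.sum_congr rfl fun i _ ↦ ?_
      rw [integral_finsetSum _ fun j _ ↦ hinteg i j]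
      simp only [integral_const_mul, integral_mul_const]
    rw [hform]
    exact integral_nonneg_of_ae (hpos.mono fun ω hω ↦ hω.dotProduct_mulVec_nonneg z)

lemma mul_sum_sq_le_of_smul_one_le [Fintype n] [DecidableEq n] {M : Matrix n n ℝ} {ε : ℝ}
    (h : ε • (1 : Matrix n n 𝕜) ≤ M.map (↑)) (v : n → ℝ) :
    ε * ∑ i, v i ^ 2 ≤ ∑ i, ∑ j, v i * M i j * v j := by
  have hv := (le_iff.1 h).re_dotProduct_nonneg fun i ↦ (v i : 𝕜)
  rw [sub_mulVec, dotProduct_sub, smul_mulVec, one_mulVec, dotProduct_smul] at hv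
  have hsq : ∑ i, v i ^ 2 = RCLike.re (star (fun i ↦ (v i : 𝕜)) ⬝ᵥ fun i ↦ (v i : 𝕜)) := by
    simp [dotProduct, sq]
  have hform : ∑ i, ∑ j, v i * M i j * v j =
      RCLike.re (star (fun i ↦ (v i : 𝕜)) ⬝ᵥ M.map (↑) *ᵥ fun i ↦ (v i : 𝕜)) := by
    simp [dotProduct, mulVec, Finset.mul_sum, mul_assoc]
  rw [hsq, hform]
  simpa [RCLike.smul_re] using hv

end LoewnerOrder

section BandlimitedMinorant

open scoped FourierTransform SchwartzMap Laplacian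

variable {V : Type*} [NormedAddCommGroup V] [InnerProductSpace ℝ V] [FiniteDimensional ℝ V]

lemma support_laplacian_subset_tsupport {F : Type*} [NormedAddCommGroup F] [NormedSpace ℝ F]
    (g : 𝓢(V, F)) : Function.support (Δ g : 𝓢(V, F)) ⊆ tsupport g := by
  refine fun x hx ↦ not_imp_comm.1 (fun hxg ↦ ?_) hx
  have hg : (g : V → F) =ᶠ[nhds x] fun _ ↦ 0 := notMem_tsupport_iff_eventuallyEq.1 hxg
  rw [SchwartzMap.laplacian_apply, (InnerProductSpace.laplacian_congr_nhds hg).eq_of_nhds,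
    InnerProductSpace.laplacian_const, Pi.zero_apply]

lemma exists_schwartzMap_ne_zero_tsupport_subset {r : ℝ} (hr : 0 < r) :
    ∃ g : 𝓢(V, ℂ), g ≠ 0 ∧ tsupport g ⊆ Metric.closedBall 0 r := by
  let b : ContDiffBump (0 : V) := ⟨r / 2, r, half_pos hr, half_lt_self hr⟩
  have hsupp : HasCompactSupport fun x ↦ (b x : ℂ) :=
    b.hasCompactSupport.comp_left ofReal_zero
  let g : 𝓢(V, ℂ) := hsupp.toSchwartzMap (ofRealCLM.contDiff.comp b.contDiff)
  refine ⟨g, fun hg ↦ ?_, ?_⟩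
  · have hg0 : (b 0 : ℂ) = 0 := DFunLike.congr_fun hg 0
    rw [b.one_of_mem_closedBall (by simp [b.rIn_pos.le])] at hg0
    exact one_ne_zero hg0
  · rw [← b.tsupport_eq]
    exact closure_mono (Function.support_comp_subset ofReal_zero b)

variable [MeasurableSpace V] [BorelSpace V]

lemma fourier_laplacian_apply_s1 {F : Type*} [NormedAddCommGroup F] [NormedSpace ℂ F]
    [CompleteSpace F] (g : 𝓢(V, F)) (ξ : V) :
    𝓕 (Δ g) ξ = -((2 * π) ^ 2 * ‖ξ‖ ^ 2) • 𝓕 g ξ := by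
  have hsq : (fun ξ : V ↦ ‖ξ‖ ^ 2).HasTemperateGrowth := by fun_prop
  rw [SchwartzMap.laplacian_eq_fourierMultiplierCLM, FourierTransform.fourier_smul,
    SchwartzMap.fourierMultiplierCLM_apply, FourierTransform.fourier_fourierInv_eq,
    _root_.smul_apply, SchwartzMap.smulLeftCLM_apply_apply hsq, smul_smul, neg_mul]

lemma fourier_comp_add_right {F : Type*} [NormedAddCommGroup F] [NormedSpace ℂ F] (u : V → F)
    (y ξ : V) : 𝓕 (fun x ↦ u (x + y)) ξ = 𝐞 (inner ℝ ξ y) • 𝓕 u ξ := by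
  rw [real_inner_comm]
  exact congrFun (VectorFourier.fourierIntegral_comp_add_right 𝐞 volume (innerₗ V) u y) ξ

lemma fourierInv_inner_fourier {H : Type*} [NormedAddCommGroup H] [InnerProductSpace ℂ H]
    [CompleteSpace H] (g u : 𝓢(V, H)) (y : V) :
    𝓕⁻ (fun ξ ↦ inner ℂ (𝓕 g ξ) (𝓕 u ξ)) y = ∫ x, inner ℂ (g x) (u (x + y)) := by
  let uy : 𝓢(V, H) := SchwartzMap.compSubConstCLM ℂ (-y) u
  have huy : (uy : V → H) = fun x ↦ u (x + y) := by
    ext x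
    simp [uy]
  calc 𝓕⁻ (fun ξ ↦ inner ℂ (𝓕 g ξ) (𝓕 u ξ)) y
      = ∫ ξ, inner ℂ (𝓕 g ξ) (𝓕 uy ξ) := by
        rw [Real.fourierInv_eq]
        refine integral_congr_ae (ae_of_all _ fun ξ ↦ ?_)
        simp only [SchwartzMap.fourier_coe, huy, fourier_comp_add_right, Circle.smul_def,
          inner_smul_right, smul_eq_mul]
    _ = ∫ x, inner ℂ (g x) (u (x + y)) := by
        rw [SchwartzMap.integral_inner_fourier_fourier, huy]

lemma fourierInv_inner_fourier_eq_zero {H : Type*} [NormedAddCommGroup H] [InnerProductSpace ℂ H]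
    [CompleteSpace H] {g u : 𝓢(V, H)} {r : ℝ} (hg : Function.support g ⊆ Metric.closedBall 0 r)
    (hu : Function.support u ⊆ Metric.closedBall 0 r) {y : V} (hy : 2 * r < ‖y‖) :
    𝓕⁻ (fun ξ ↦ inner ℂ (𝓕 g ξ) (𝓕 u ξ)) y = 0 := by
  rw [fourierInv_inner_fourier]
  refine integral_eq_zero_of_ae (ae_of_all _ fun x ↦ ?_)
  by_contra hne
  have hgx : ‖x‖ ≤ r := mem_closedBall_zero_iff.1 (hg fun h ↦ hne (by simp [h]))
  have hux : ‖x + y‖ ≤ r := mem_closedBall_zero_iff.1 (hu fun h ↦ hne (by simp [h]))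
  have := norm_sub_le (x + y) x
  rw [add_sub_cancel_left] at this
  linarith

/-- The weight `(R² - ‖ξ‖²) |ĝ(ξ)|²`: it is positive only inside the ball of radius `R`, and its
inverse Fourier transform is the cross-correlation of `g` with `R² g + (2π)⁻² Δ g`. -/
noncomputable def truncatedPower (g : 𝓢(V, ℂ)) (R : ℝ) (ξ : V) : ℝ :=
  (R ^ 2 - ‖ξ‖ ^ 2) * ‖𝓕 g ξ‖ ^ 2

lemma ofReal_truncatedPower (g : 𝓢(V, ℂ)) (R : ℝ) (ξ : V) :
    (truncatedPower g R ξ : ℂ) =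
      inner ℂ (𝓕 g ξ) (𝓕 (R ^ 2 • g + ((2 * π) ^ 2)⁻¹ • Δ g) ξ) := by
  rw [FourierTransform.fourier_add, FourierTransform.fourier_smul, FourierTransform.fourier_smul,
    _root_.add_apply, _root_.smul_apply, _root_.smul_apply, fourier_laplacian_apply_s1,
    smul_smul, ← add_smul, real_smul, ← smul_eq_mul, inner_smul_right, inner_self_eq_norm_sq_to_K,
    truncatedPower, RCLike.ofReal_eq_complex_ofReal]
  push_cast
  field_simp
  ring

lemma integrable_truncatedPower (g : 𝓢(V, ℂ)) (R : ℝ) : Integrable (truncatedPower g R) := by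
  have h : Integrable fun ξ ↦ (truncatedPower g R ξ : ℂ) := by
    simp only [ofReal_truncatedPower, RCLike.inner_apply]
    exact (SchwartzMap.memLp _ 2 volume).integrable_mul ((𝓕 g).memLp 2 volume).star
  exact h.re

lemma fourierInv_truncatedPower_eq_zero {g : 𝓢(V, ℂ)} {r : ℝ}
    (hg : tsupport g ⊆ Metric.closedBall 0 r) (R : ℝ) {y : V} (hy : 2 * r < ‖y‖) :
    𝓕⁻ (fun ξ ↦ (truncatedPower g R ξ : ℂ)) y = 0 := by
  simp only [ofReal_truncatedPower]
  refine fourierInv_inner_fourier_eq_zero ((subset_tsupport g).trans hg) ?_ hy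
  refine (Function.support_add _ _).trans (Set.union_subset ?_ ?_)
  · exact (Function.support_const_smul_subset _ _).trans ((subset_tsupport g).trans hg)
  · exact (Function.support_const_smul_subset _ _).trans
      ((support_laplacian_subset_tsupport g).trans hg)

lemma exists_integral_truncatedPower_pos {g : 𝓢(V, ℂ)} (hg : g ≠ 0) :
    ∃ R, 0 < ∫ ξ, truncatedPower g R ξ := by
  have hinteg : Integrable fun ξ ↦ ‖𝓕 g ξ‖ ^ 2 :=
    ((𝓕 g).memLp 2).integrable_norm_pow two_ne_zero
  obtain ⟨ξ₀, hξ₀⟩ : ∃ ξ, 𝓕 g ξ ≠ 0 := by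
    by_contra! h
    exact hg ((FourierTransform.fourierCLE ℂ 𝓢(V, ℂ)).map_eq_zero_iff.1 (SchwartzMap.ext h))
  have hpos : 0 < ∫ ξ, ‖𝓕 g ξ‖ ^ 2 :=
    integral_pos_of_integrable_nonneg_nonzero (x := ξ₀) ((𝓕 g).continuous.norm.pow 2) hinteg
      (fun ξ ↦ by positivity) (by positivity)
  have hsplit (R : ℝ) : ∫ ξ, truncatedPower g R ξ =
      R ^ 2 * (∫ ξ, ‖𝓕 g ξ‖ ^ 2) + ∫ ξ, truncatedPower g 0 ξ := by
    rw [← integral_const_mul, ← integral_add (hinteg.const_mul _) (integrable_truncatedPower g 0)]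
    refine integral_congr_ae (ae_of_all _ fun ξ ↦ ?_)
    simp only [truncatedPower]
    ring
  obtain ⟨R, hR⟩ := ((((tendsto_pow_atTop two_ne_zero).atTop_mul_const hpos).atTop_add
    tendsto_const_nhds).eventually_gt_atTop 0).exists
  exact ⟨R, hR.trans_eq (hsplit R).symm⟩

lemma exists_truncatedPower_le_indicator (g : 𝓢(V, ℂ)) (R : ℝ) :
    ∃ C > 0, truncatedPower g R ≤ (Metric.closedBall 0 |R|).indicator fun _ ↦ C := by
  obtain ⟨B, hB⟩ : ∃ B : ℝ, ∀ ξ, ‖𝓕 g ξ‖ ≤ B :=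
    ⟨_, (𝓕 g).toBoundedContinuousFunction.norm_coe_le_norm⟩
  refine ⟨R ^ 2 * B ^ 2 + 1, by positivity, fun ξ ↦ ?_⟩
  by_cases hξ : ξ ∈ Metric.closedBall 0 |R|
  · rw [Set.indicator_of_mem hξ]
    calc truncatedPower g R ξ ≤ R ^ 2 * ‖𝓕 g ξ‖ ^ 2 := by
          unfold truncatedPower
          gcongr
          exact sub_le_self _ (by positivity)
      _ ≤ R ^ 2 * B ^ 2 := by gcongr; exact hB ξ
      _ ≤ R ^ 2 * B ^ 2 + 1 := by linarith
  · rw [Set.indicator_of_notMem hξ]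
    rw [mem_closedBall_zero_iff, not_le] at hξ
    refine mul_nonpos_of_nonpos_of_nonneg (sub_nonpos.2 ?_) (by positivity)
    exact sq_le_sq.2 (hξ.le.trans_eq (abs_norm ξ).symm)

lemma exists_bandlimited_minorant (V : Type*) [NormedAddCommGroup V] [InnerProductSpace ℝ V]
    [FiniteDimensional ℝ V] [MeasurableSpace V] [BorelSpace V] {δ : ℝ} (hδ : 0 < δ) :
    ∃ (w : V → ℝ) (R : ℝ), Integrable w ∧ w ≤ (Metric.closedBall 0 R).indicator 1 ∧
      0 < ∫ ξ, w ξ ∧ ∀ y, δ ≤ ‖y‖ → 𝓕⁻ (fun ξ ↦ (w ξ : ℂ)) y = 0 := by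
  obtain ⟨g, hg, hsupp⟩ :=
    exists_schwartzMap_ne_zero_tsupport_subset (V := V) (r := δ / 3) (by positivity)
  obtain ⟨R, hR⟩ := exists_integral_truncatedPower_pos hg
  obtain ⟨C, hC, hle⟩ := exists_truncatedPower_le_indicator g R
  refine ⟨C⁻¹ • truncatedPower g R, |R|, (integrable_truncatedPower g R).smul _, fun ξ ↦ ?_, ?_,
    fun y hy ↦ ?_⟩
  · calc C⁻¹ * truncatedPower g R ξ
        ≤ C⁻¹ * (Metric.closedBall 0 |R|).indicator (fun _ ↦ C) ξ := by gcongr; exact hle ξ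
      _ = (Metric.closedBall 0 |R|).indicator 1 ξ := by
        rw [← Set.indicator_const_mul, inv_mul_cancel₀ hC.ne']
        rfl
  · simp only [Pi.smul_apply, integral_smul]
    positivity
  · have hzero := fourierInv_truncatedPower_eq_zero hsupp R (y := y) (by linarith)
    rw [Real.fourierInv_eq] at hzero ⊢
    calc ∫ ξ, 𝐞 (inner ℝ ξ y) • (((C⁻¹ • truncatedPower g R) ξ : ℝ) : ℂ)
        = ∫ ξ, C⁻¹ • 𝐞 (inner ℝ ξ y) • (truncatedPower g R ξ : ℂ) := by
          simp [Circle.smul_def, mul_left_comm]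
      _ = 0 := by rw [integral_smul, hzero, smul_zero]

end BandlimitedMinorant

section PlaneWave

variable {ι : Type*} [Fintype ι]

/-- The plane wave `x ↦ exp (i f·x)` of frequency `f`, in the normalisation without `2π` of the
frequency variable. -/
noncomputable def planeWave (f x : ι → ℝ) : ℂ :=
  Complex.exp (I * ((f ⬝ᵥ x : ℝ) : ℂ))

lemma norm_planeWave (f x : ι → ℝ) : ‖planeWave f x‖ = 1 :=
  norm_exp_I_mul_ofReal _

lemma continuous_planeWave_left (x : ι → ℝ) : Continuous fun f ↦ planeWave f x := by
  unfold planeWave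
  fun_prop

lemma planeWave_zero_right (f : ι → ℝ) : planeWave f 0 = 1 := by
  simp [planeWave]

lemma planeWave_sub_right (f x y : ι → ℝ) :
    planeWave f (x - y) = planeWave f x * star (planeWave f y) := by
  simp only [planeWave, RCLike.star_def, ← exp_conj, map_mul, conj_I, conj_ofReal]
  rw [← Complex.exp_add, dotProduct_sub, ofReal_sub]
  ring_nf

lemma integrable_mul_planeWave_iff {g : (ι → ℝ) → ℂ} (x : ι → ℝ) :
    Integrable (fun f ↦ g f * planeWave f x) ↔ Integrable g := by
  have hmul {g : (ι → ℝ) → ℂ} (hg : Integrable g) (y : ι → ℝ) :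
      Integrable fun f ↦ g f * planeWave f y :=
    hg.mul_bdd (continuous_planeWave_left y).aestronglyMeasurable
      (ae_of_all _ fun f ↦ (norm_planeWave f y).le)
  refine ⟨fun h ↦ ?_, fun h ↦ hmul h x⟩
  have hcancel (f : ι → ℝ) : planeWave f x * planeWave f (-x) = 1 := by
    simp [planeWave, ← Complex.exp_add]
  simpa only [mul_assoc, hcancel, mul_one] using hmul h (-x)

lemma integrable_of_fourier_inversion_s1 {g h : (ι → ℝ) → ℂ} {a : ℝ}
    {K : (ι → ℝ) → (ι → ℝ) → ℂ} (hg : ∀ f, g f = a • ∫ x, h x * K f x)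
    (hh : ∀ x, h x = ∫ f, g f * planeWave f x) : Integrable g := by
  -- If `g` were not integrable, all integrals defining `h` would take the junk value `0`,
  -- so `h = 0` and then `g = 0`.
  by_contra hgint
  have hh0 (x : ι → ℝ) : h x = 0 := by
    rw [hh, integral_undef (mt (integrable_mul_planeWave_iff x).1 hgint)]
  have hg0 : g = 0 := funext fun f ↦ by simp [hg f, hh0]
  exact hgint (hg0 ▸ integrable_zero _ _ _)

/-- A minorant `w` of the indicator of the ball of radius `R` (in the sup norm) which has positive
integral and whose Fourier transform vanishes outside the open ball of radius `Δ`. -/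
structure IsBandlimitedMinorant (Δ R : ℝ) (w : (ι → ℝ) → ℝ) : Prop where
  integrable : Integrable w
  le_indicator : w ≤ (Metric.closedBall 0 R).indicator 1
  integral_pos : 0 < ∫ f, w f
  integral_mul_planeWave_eq_zero : ∀ x, Δ ≤ ‖x‖ → ∫ f, (w f : ℂ) * planeWave f x = 0

open scoped FourierTransform

lemma fourierChar_inner_toLp (f x : ι → ℝ) :
    (𝐞 (inner ℝ (WithLp.toLp 2 f) (WithLp.toLp 2 ((2 * π)⁻¹ • x))) : ℂ) = planeWave f x := by
  rw [Real.fourierChar_apply, EuclideanSpace.inner_toLp_toLp, planeWave, star_trivial,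
    smul_dotProduct, dotProduct_comm, smul_eq_mul, mul_inv_cancel_left₀ (by positivity), mul_comm]

lemma exists_isBandlimitedMinorant {Δ : ℝ} (hΔ : 0 < Δ) :
    ∃ (R : ℝ) (w : (ι → ℝ) → ℝ), IsBandlimitedMinorant Δ R w := by
  obtain ⟨w, R, hinteg, hle, hpos, hzero⟩ :=
    exists_bandlimited_minorant (EuclideanSpace ℝ ι) (δ := (2 * π)⁻¹ * Δ) (by positivity)
  have hvol := PiLp.volume_preserving_toLp ι
  have hemb := (MeasurableEquiv.toLp 2 (ι → ℝ)).measurableEmbedding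
  have hnorm (x : ι → ℝ) : ‖x‖ ≤ ‖WithLp.toLp 2 x‖ :=
    (pi_norm_le_iff_of_nonneg (norm_nonneg _)).2 fun i ↦
      PiLp.norm_apply_le (p := 2) (WithLp.toLp 2 x) i
  refine ⟨R, fun f ↦ w (WithLp.toLp 2 f), (hvol.integrable_comp_emb hemb).2 hinteg, fun f ↦ ?_, ?_,
    fun x hx ↦ ?_⟩
  · calc w (WithLp.toLp 2 f)
        ≤ (Metric.closedBall 0 R).indicator 1 (WithLp.toLp 2 f) := hle _
      _ = (WithLp.toLp 2 ⁻¹' Metric.closedBall 0 R).indicator 1 f := rfl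
      _ ≤ (Metric.closedBall 0 R).indicator 1 f := by
        refine Set.indicator_le_indicator_of_subset (fun x hx ↦ ?_) (fun _ ↦ zero_le_one) f
        rw [Set.mem_preimage, mem_closedBall_zero_iff] at hx
        exact mem_closedBall_zero_iff.2 ((hnorm x).trans hx)
  · rwa [hvol.integral_comp hemb]
  · have hy : (2 * π)⁻¹ * Δ ≤ ‖WithLp.toLp 2 ((2 * π)⁻¹ • x)‖ := by
      refine le_trans ?_ (hnorm _)
      rw [norm_smul, Real.norm_of_nonneg (by positivity)]
      gcongr
    rw [← hzero _ hy, Real.fourierInv_eq, ← hvol.integral_comp hemb]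
    simp only [Circle.smul_def, fourierChar_inner_toLp, smul_eq_mul, mul_comm (planeWave _ x)]

end PlaneWave

section CrossCovariance

open scoped ComplexOrder MatrixOrder

variable {ι κ α : Type*} [Fintype ι]

lemma posSemidef_submatrix_mul_planeWave [Finite α] {M : Matrix κ κ ℂ}
    (hM : M.PosSemidef) (l : α → κ) (x : α → ι → ℝ) (f : ι → ℝ) :
    (Matrix.of fun a b ↦ M (l a) (l b) * planeWave f (x a - x b)).PosSemidef := by
  have hschur : (Matrix.of fun a b ↦ M (l a) (l b) * planeWave f (x a - x b)) =
      M.submatrix l l ⊙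
        vecMulVec (fun a ↦ planeWave f (x a)) (star fun a ↦ planeWave f (x a)) := by
    ext a b
    simp [planeWave_sub_right, vecMulVec_apply]
  rw [hschur]
  exact (hM.submatrix l).hadamard (posSemidef_vecMulVec_self_star _)

/-- The covariance matrix at the points `x a`, each observing the component `l a`, of the
stationary multivariate field with matrix covariance function `c`. -/
def crossCovariance (c : κ → κ → (ι → ℝ) → ℂ) (l : α → κ) (x : α → ι → ℝ) : Matrix α α ℂ :=
  Matrix.of fun a b ↦ c (l a) (l b) (x a - x b)

/-- Two distinct points observing the same component are at distance at least `Δ`. -/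
def IsComponentwiseSeparated (Δ : ℝ) (l : α → κ) (x : α → ι → ℝ) : Prop :=
  ∀ a b, a ≠ b → l a = l b → Δ ≤ ‖x a - x b‖

lemma integral_smul_one_le_crossCovariance [DecidableEq κ] [Finite α] [DecidableEq α] {Δ : ℝ}
    {w : (ι → ℝ) → ℝ} (hw : Integrable w)
    (hzero : ∀ x, Δ ≤ ‖x‖ → ∫ f, (w f : ℂ) * planeWave f x = 0)
    {S : (ι → ℝ) → Matrix κ κ ℂ} (hS : ∀ k l, Integrable fun f ↦ S f k l)
    (hle : ∀ f, w f • (1 : Matrix κ κ ℂ) ≤ S f) {l : α → κ} {x : α → ι → ℝ}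
    (hsep : IsComponentwiseSeparated Δ l x) :
    (∫ f, w f) • (1 : Matrix α α ℂ) ≤
      crossCovariance (fun k l x ↦ ∫ f, S f k l * planeWave f x) l x := by
  have hw1 (k l : κ) : Integrable fun f ↦ (w f • (1 : Matrix κ κ ℂ)) k l :=
    hw.smul_const ((1 : Matrix κ κ ℂ) k l)
  have hSw (k l : κ) (y : ι → ℝ) : Integrable fun f ↦ S f k l * planeWave f y :=
    (integrable_mul_planeWave_iff y).2 (hS k l)
  have hw1w (k l : κ) (y : ι → ℝ) :
      Integrable fun f ↦ (w f • (1 : Matrix κ κ ℂ)) k l * planeWave f y :=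
    (integrable_mul_planeWave_iff y).2 (hw1 k l)
  have hone (a b : α) : ∫ f, (w f • (1 : Matrix κ κ ℂ)) (l a) (l b) * planeWave f (x a - x b) =
      ((∫ f, w f) • (1 : Matrix α α ℂ)) a b := by
    rcases eq_or_ne a b with rfl | hab
    · simp [planeWave_zero_right, integral_complex_ofReal]
    · by_cases hl : l a = l b
      · simpa [hl, hab] using hzero _ (hsep a b hab hl)
      · simp [hl, hab]
  have hdiff : crossCovariance (fun k l x ↦ ∫ f, S f k l * planeWave f x) l x -
      (∫ f, w f) • (1 : Matrix α α ℂ) = Matrix.of fun a b ↦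
        ∫ f, (S f - w f • 1) (l a) (l b) * planeWave f (x a - x b) := by
    ext a b
    simp only [crossCovariance, of_apply, Matrix.sub_apply, sub_mul]
    rw [integral_sub (hSw _ _ _) (hw1w _ _ _), hone]
  rw [Matrix.le_iff, hdiff]
  refine posSemidef_integral_s1 (A := fun f ↦ Matrix.of fun a b ↦
    (S f - w f • 1) (l a) (l b) * planeWave f (x a - x b)) (fun a b ↦ ?_)
    (ae_of_all _ fun f ↦ posSemidef_submatrix_mul_planeWave (Matrix.le_iff.1 (hle f)) l x f)
  exact (integrable_mul_planeWave_iff _).2 ((hS _ _).sub (hw1 _ _))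

theorem smallest_eigenvalue_covariance_matrix_bounded_uniformly_in_parameter_general
    [Finite κ] {T : Type*} [TopologicalSpace T] {Θ : Set T} (hΘ : IsCompact Θ)
    {S : T → (ι → ℝ) → Matrix κ κ ℂ} {c : T → κ → κ → (ι → ℝ) → ℂ}
    (hinteg : ∀ θ ∈ Θ, ∀ k l, Integrable fun f ↦ S θ f k l)
    (hinv : ∀ θ ∈ Θ, ∀ k l x, c θ k l x = ∫ f, S θ f k l * planeWave f x)
    (hcont : ContinuousOn (fun fθ : (ι → ℝ) × T ↦ S fθ.2 fθ.1) (Set.univ ×ˢ Θ))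
    (hpos : ∀ θ ∈ Θ, ∀ f, (S θ f).PosDef) {Δ : ℝ} (hΔ : 0 < Δ) :
    ∃ ε : ℝ, 0 < ε ∧ ∀ θ ∈ Θ, ∀ {α : Type*} [Finite α] [DecidableEq α] (l : α → κ)
      (x : α → ι → ℝ), IsComponentwiseSeparated Δ l x →
        ε • (1 : Matrix α α ℂ) ≤ crossCovariance (c θ) l x := by
  classical
  cases nonempty_fintype κ
  obtain ⟨R, w, hw⟩ := exists_isBandlimitedMinorant (ι := ι) hΔ
  obtain ⟨δ, hδ, hδS⟩ := exists_smul_one_le_of_isCompact_of_posDef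
    ((isCompact_closedBall (0 : ι → ℝ) R).prod hΘ)
    (hcont.mono (Set.prod_mono (Set.subset_univ _) subset_rfl)) fun fθ h ↦ hpos _ h.2 fθ.1
  refine ⟨δ * ∫ f, w f, mul_pos hδ hw.integral_pos, fun θ hθ α _ _ l x hsep ↦ ?_⟩
  have hle (f : ι → ℝ) : (δ * w f) • (1 : Matrix κ κ ℂ) ≤ S θ f := by
    by_cases hf : f ∈ Metric.closedBall 0 R
    · have hw1 : w f ≤ 1 := by simpa [hf] using hw.le_indicator f
      exact (smul_le_smul_of_nonneg_right (mul_le_of_le_one_right hδ.le hw1) zero_le_one).trans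
        (hδS (f, θ) ⟨hf, hθ⟩)
    · have hw0 : w f ≤ 0 := by simpa [hf] using hw.le_indicator f
      exact (smul_nonpos_of_nonpos_of_nonneg (mul_nonpos_of_nonneg_of_nonpos hδ.le hw0)
        zero_le_one).trans (hpos θ hθ f).posSemidef.nonneg
  rw [← integral_const_mul, funext fun k ↦ funext fun l ↦ funext fun x ↦ hinv θ hθ k l x]
  refine integral_smul_one_le_crossCovariance (hw.integrable.const_mul δ) (fun y hy ↦ ?_)
    (hinteg θ hθ) hle hsep
  simp only [ofReal_mul, mul_assoc, integral_const_mul, hw.integral_mul_planeWave_eq_zero y hy,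
    mul_zero]

end CrossCovariance

/-- **Theorem 2 (Bachoc & Furrer).** Uniform version of the smallest-eigenvalue lower bound
over a parametric family `{c_{θ,kℓ}}`, `θ` in a compact set `Θ ⊆ ℝ^q`: under a decay bound
uniform in `θ`, Fourier inversion for every `θ`, joint continuity of the spectral density
matrix `Ĉ_θ(f)` in `(f, θ)` with strictly positive smallest eigenvalue everywhere, and the
minimal-distance condition on the observation points, the smallest eigenvalue of `Σ_θ` is
bounded away from zero uniformly in `θ ∈ Θ` and in the sample sizes `n₁, …, n_p`. -/
theorem smallest_eigenvalue_covariance_matrix_bounded_uniformly_in_parameter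
    (d p q : ℕ) (hd : 1 ≤ d) (hp : 1 ≤ p)
    (Θ : Set (Fin q → ℝ)) (hΘ : IsCompact Θ)
    (c : (Fin q → ℝ) → Fin p → Fin p → (Fin d → ℝ) → ℝ)
    (A τ : ℝ) (hτ : 0 < τ)
    (hdecay : ∀ θ ∈ Θ, ∀ k l (x : Fin d → ℝ),
      |c θ k l x| ≤ A / (1 + ‖x‖ ^ ((d : ℝ) + τ)))
    (chat : (Fin q → ℝ) → Fin p → Fin p → (Fin d → ℝ) → ℂ)
    (hchat : ∀ θ ∈ Θ, ∀ k l (f : Fin d → ℝ), chat θ k l f =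
      ((2 * π : ℝ) ^ d : ℝ)⁻¹ •
        ∫ x : Fin d → ℝ, (c θ k l x : ℂ) *
          Complex.exp (-(Complex.I * ((∑ t, f t * x t : ℝ) : ℂ))))
    (hinv : ∀ θ ∈ Θ, ∀ k l (x : Fin d → ℝ), (c θ k l x : ℂ) =
      ∫ f : Fin d → ℝ, chat θ k l f *
        Complex.exp (Complex.I * ((∑ t, f t * x t : ℝ) : ℂ)))
    (hcont : ContinuousOn
      (fun fθ : (Fin d → ℝ) × (Fin q → ℝ) => Matrix.of fun k l => chat fθ.2 k l fθ.1)
      (Set.univ ×ˢ Θ))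
    (hherm : ∀ θ ∈ Θ, ∀ f : Fin d → ℝ, (Matrix.of fun k l => chat θ k l f).IsHermitian)
    (hpos : ∀ θ, ∀ hθ : θ ∈ Θ, ∀ (f : Fin d → ℝ) (i : Fin p),
      0 < (hherm θ hθ f).eigenvalues i)
    (X : Fin p → ℕ → (Fin d → ℝ)) (Δ : ℝ) (hΔ : 0 < Δ)
    (hsep : ∀ (k : Fin p) (i j : ℕ), i ≠ j → Δ ≤ ‖X k i - X k j‖) :
    ∃ ε > 0, ∀ θ ∈ Θ, ∀ n : Fin p → ℕ, (∀ k, 1 ≤ n k) →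
      ∀ v : ((k : Fin p) × Fin (n k)) → ℝ,
        ε * ∑ a, v a ^ 2 ≤
          ∑ a, ∑ b, v a * c θ a.1 b.1 (X a.1 a.2 - X b.1 b.2) * v b := by
  obtain ⟨ε, hε, hle⟩ :=
    smallest_eigenvalue_covariance_matrix_bounded_uniformly_in_parameter_general hΘ
      (S := fun θ f ↦ Matrix.of fun k l ↦ chat θ k l f) (c := fun θ k l x ↦ (c θ k l x : ℂ))
      (fun θ hθ k l ↦ integrable_of_fourier_inversion_s1 (hchat θ hθ k l) (hinv θ hθ k l))
      hinv hcont (fun θ hθ f ↦ (hherm θ hθ f).posDef_iff_eigenvalues_pos.2 (hpos θ hθ f)) hΔ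
  refine ⟨ε, hε, fun θ hθ n _ v ↦ mul_sum_sq_le_of_smul_one_le
    (hle θ hθ Sigma.fst (fun a : (k : Fin p) × Fin (n k) ↦ X a.1 a.2) ?_) v⟩
  rintro ⟨k, i⟩ ⟨_, j⟩ hij rfl
  exact hsep k i j fun h ↦ hij (by rw [Fin.ext h])
end
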